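/- A finite ULD lattice L belongs to L(ASM), i.e. L is order-isomorphic to the configuration space of some Abelian Sandpile Model reaching a unique fixed point, if and only if the system Ω has a non-negative integer solution. -/

import Mathlib

open Classical

section CFGdefs

variable {V : Type*}

/-- Out-degree of a vertex in a directed multigraph with edge multiplicities `E`. -/
noncomputable def outDeg (E : V → V → ℕ) (v : V) : ℕ := ∑ᶠ u, E v u

/-- A vertex is a sink if all its outgoing edges are loops. -/
def IsSink (E : V → V → ℕ) (v : V) : Prop := outDeg E v = E v v

/-- A vertex is firable in configuration `c`. -/
def Firable (E : V → V → ℕ) (c : V → ℕ) (v : V) : Prop :=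
  ¬ IsSink E v ∧ outDeg E v ≤ c v

/-- The result of firing vertex `v` in configuration `c`. -/
noncomputable def fire (E : V → V → ℕ) (c : V → ℕ) (v : V) : V → ℕ :=
  fun u => if u = v then c v - outDeg E v + E v v else c u + E v u

/-- The configuration obtained by firing a list of vertices in order. -/
noncomputable def fireList (E : V → V → ℕ) : (V → ℕ) → List V → (V → ℕ)
  | c, [] => c
  | c, v :: l => fireList E (fire E c v) l

/-- A list of vertices is a valid firing sequence from `c`. -/
def ValidSeq (E : V → V → ℕ) : (V → ℕ) → List V → Prop
  | _, [] => True
  | c, v :: l => Firable E c v ∧ ValidSeq E (fire E c v) l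

/-- `c'` is reachable from `c` by a finite sequence of firings. -/
def Reaches (E : V → V → ℕ) (c c' : V → ℕ) : Prop :=
  ∃ l : List V, ValidSeq E c l ∧ fireList E c l = c'

/-- A configuration with no firable vertex. -/
def FixedPt (E : V → V → ℕ) (c : V → ℕ) : Prop := ∀ v, ¬ Firable E c v

/-- The chip firing game `CFG(G,O)` reaches a unique fixed point. -/
def ReachesUFP (E : V → V → ℕ) (O : V → ℕ) : Prop :=
  ∃ fp : V → ℕ, Reaches E O fp ∧ FixedPt E fp ∧ ∀ c, Reaches E O c → Reaches E c fp

/-- The game is simple: in every firing sequence from `O` to the fixed point,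
each vertex fires at most once. -/
def SimpleCFG (E : V → V → ℕ) (O : V → ℕ) : Prop :=
  ∀ l : List V, ValidSeq E O l → FixedPt E (fireList E O l) → l.Nodup

/-- Single firing step from `c` to `c'` by firing vertex `v`. -/
def FireStep (E : V → V → ℕ) (c : V → ℕ) (v : V) (c' : V → ℕ) : Prop :=
  Firable E c v ∧ fire E c v = c'

/-- The partial order `L` is order-isomorphic to the configuration space of
`CFG(G,O)` ordered by reachability. -/
def Generates (E : V → V → ℕ) (O : V → ℕ) (L : Type*) [PartialOrder L] : Prop :=
  ∃ f : L ≃ {c : V → ℕ // Reaches E O c},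
    ∀ a b : L, a ≤ b ↔ Reaches E (f a).val (f b).val

/-- The support graph is connected (as an undirected graph). -/
def ConnectedG (E : V → V → ℕ) : Prop :=
  ∀ u v : V, Relation.ReflTransGen (fun a b => 0 < E a b ∨ 0 < E b a) u v

/-- The support graph together with its initial data is an Abelian Sandpile Model. -/
def IsASM (E : V → V → ℕ) : Prop :=
  ConnectedG E ∧ ∃ s : V, IsSink E s ∧ (∀ v, IsSink E v → v = s) ∧
    ∀ v₁ v₂ : V, v₁ ≠ v₂ → v₁ ≠ s → v₂ ≠ s → E v₁ v₂ = E v₂ v₁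

/-- The directed multigraph has no directed cycle. -/
def AcyclicG (E : V → V → ℕ) : Prop :=
  ∀ v : V, ¬ Relation.TransGen (fun a b => 0 < E a b) v v

end CFGdefs

/-- `L` is generated by some chip firing game reaching a unique fixed point. -/
def MemLCFG (L : Type*) [PartialOrder L] : Prop :=
  ∃ (V : Type) (_ : Finite V) (E : V → V → ℕ) (O : V → ℕ),
    ReachesUFP E O ∧ Generates E O L

/-- `L` is generated by some Abelian Sandpile Model reaching a unique fixed point. -/
def MemLASM (L : Type*) [PartialOrder L] : Prop :=
  ∃ (V : Type) (_ : Finite V) (E : V → V → ℕ) (O : V → ℕ),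
    IsASM E ∧ ReachesUFP E O ∧ Generates E O L

section Latticedefs

variable {L : Type*} [Lattice L]

/-- `m` is meet-irreducible: it has exactly one upper cover. -/
def MeetIrred (m : L) : Prop := ∃! y, m ⋖ y

/-- `j` is join-irreducible: it has exactly one lower cover. -/
def JoinIrred (j : L) : Prop := ∃! y, y ⋖ j

/-- The set `M_x \ M_y` of meet-irreducibles above `x` but not above `y`. -/
def MsetDiff (x y : L) : Set L := {m | MeetIrred m ∧ x ≤ m ∧ ¬ y ≤ m}

/-- The set `M \ M_a` of meet-irreducibles not above `a`. -/
def MnotAbove (a : L) : Set L := {m | MeetIrred m ∧ ¬ a ≤ m}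

/-- `x⁺`: the join of all upper covers of `x`. -/
noncomputable def uplus [Fintype L] [OrderBot L] (x : L) : L :=
  Finset.univ.sup (fun y => if x ⋖ y then y else ⊥)

/-- `L` is upper locally distributive: for every `x ≠ ⊤` the interval `[x, x⁺]`
is isomorphic to a Boolean lattice (a hypercube). -/
def IsULD (L : Type*) [Lattice L] [Fintype L] [BoundedOrder L] : Prop :=
  ∀ x : L, x ≠ ⊤ → ∃ n : ℕ, Nonempty (↥(Set.Icc x (uplus x)) ≃o Set (Fin n))

/-- `𝔘_m`: the minimal elements of `{x : ∃ y, x ⋖ y and 𝔪(x,y) = m}`. -/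
def Uset (m : L) : Set L :=
  {x | Minimal (fun z => ∃ y, z ⋖ y ∧ MsetDiff z y = {m}) x}

/-- `𝔏_m`: the maximal elements of `{x : a ≰ x for every a ∈ 𝔘_m}`. -/
def Lset (m : L) : Set L :=
  {x | Maximal (fun z => ∀ a ∈ Uset m, ¬ a ≤ z) x}

/-- `(w, e)` is a (non-negative integer) solution of the system `E(m)`. -/
def SolvesE [OrderBot L] (m : L) (w : ℕ) (e : L → ℕ) : Prop :=
  (Uset m = {(⊥ : L)} → 1 ≤ w) ∧
  (Uset m ≠ {(⊥ : L)} →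
    (∀ a ∈ Lset m, (∑ᶠ x ∈ MnotAbove a, e x) < w) ∧
    (∀ a ∈ Uset m, w ≤ ∑ᶠ x ∈ MnotAbove a, e x))

/-- The system `E(m)` has a non-negative integer solution. -/
def HasSolE [OrderBot L] (m : L) : Prop := ∃ w e, SolvesE m w e

/-- The variable `e_{x,m}` occurs in the system `𝔈(m)`. -/
def VarOccurs [OrderBot L] (x m : L) : Prop :=
  MeetIrred m ∧ Uset m ≠ {(⊥ : L)} ∧ ∃ a ∈ Uset m ∪ Lset m, x ∈ MnotAbove a

/-- `(W, Ee)` is a non-negative integer solution of the system `Ω`. -/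
def SolvesOmega [OrderBot L] (W : L → ℕ) (Ee : L → L → ℕ) : Prop :=
  (∀ m : L, MeetIrred m → SolvesE m (W m) (fun x => Ee x m)) ∧
  (∀ m₁ m₂ : L, m₁ ≠ m₂ → VarOccurs m₁ m₂ → VarOccurs m₂ m₁ → Ee m₁ m₂ = Ee m₂ m₁)

/-- The edge relation of the directed graph `𝒢` on the meet-irreducibles. -/
def Gedge (m₁ m₂ : L) : Prop :=
  MeetIrred m₁ ∧ MeetIrred m₂ ∧ ∃ a ∈ Uset m₂, m₁ ∈ MnotAbove a

end Latticedefs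

/-- The system `Ω` has a non-negative integer solution. -/
def HasSolOmega (L : Type*) [Lattice L] [OrderBot L] : Prop :=
  ∃ W Ee, SolvesOmega (L := L) W Ee

/-- The directed graph `𝒢` on the meet-irreducibles is acyclic. -/
def GAcyclic (L : Type*) [Lattice L] : Prop :=
  ∀ m : L, ¬ Relation.TransGen (Gedge (L := L)) m m

section FiniteLattice

variable {L : Type*} [Lattice L]

theorem mnotAbove_mono {a b : L} (h : a ≤ b) : MnotAbove a ⊆ MnotAbove b :=
  fun _ hm => ⟨hm.1, fun hb => hm.2 (h.trans hb)⟩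

theorem mnotAbove_eq_insert {a b m : L} (hab : a ≤ b) (h : MsetDiff a b = {m}) :
    MnotAbove b = insert m (MnotAbove a) := by
  have hm : m ∈ MsetDiff a b := h ▸ rfl
  ext x
  constructor
  · intro hx
    by_cases hax : a ≤ x
    · left
      have : x ∈ MsetDiff a b := ⟨hx.1, hax, hx.2⟩
      rwa [h] at this
    · exact Or.inr ⟨hx.1, hax⟩
  · rintro (rfl | hx)
    · exact ⟨hm.1, hm.2.2⟩
    · exact mnotAbove_mono hab hx

theorem MeetIrred.le_of_lt_of_covBy [Finite L] {m y x : L} (hm : MeetIrred m) (hy : m ⋖ y)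
    (hx : m < x) : y ≤ x := by
  obtain ⟨z, hz, hzx⟩ := exists_covBy_le_of_lt hx
  exact (hm.unique hy hz).trans_le hzx

theorem exists_meetIrred_separating [Finite L] {x y : L} (h : ¬ y ≤ x) :
    ∃ m, MeetIrred m ∧ x ≤ m ∧ ¬ y ≤ m := by
  obtain ⟨m, hxm, hm⟩ := (Set.toFinite {z : L | ¬ y ≤ z}).exists_le_maximal h
  have key : ∀ z, m < z → m ⊔ y ≤ z := fun z hz =>
    sup_le hz.le (by_contra fun hyz => hz.not_ge (hm.2 hyz hz.le))
  have hlt : m < m ⊔ y := left_lt_sup.2 hm.1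
  have hcov : m ⋖ m ⊔ y := ⟨hlt, fun c hc hc' => hc'.not_ge (key c hc)⟩
  exact ⟨m, ⟨_, hcov, fun z hz => ((hz.eq_or_eq hlt.le (key z hz.lt)).resolve_left hlt.ne').symm⟩,
    hxm, hm.1⟩

theorem le_iff_mnotAbove_subset [Finite L] {a b : L} :
    a ≤ b ↔ MnotAbove a ⊆ MnotAbove b := by
  refine ⟨mnotAbove_mono, fun h => by_contra fun hab => ?_⟩
  obtain ⟨m, hm, hbm, ham⟩ := exists_meetIrred_separating hab
  exact (h ⟨hm, ham⟩).2 hbm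

theorem exists_mem_uset_le [Finite L] {m z y : L} (hzy : z ⋖ y) (h : MsetDiff z y = {m}) :
    ∃ u ∈ Uset m, u ≤ z := by
  obtain ⟨u, huz, hu⟩ :=
    (Set.toFinite {z : L | ∃ y, z ⋖ y ∧ MsetDiff z y = {m}}).exists_le_minimal ⟨y, hzy, h⟩
  exact ⟨u, hu, huz⟩

theorem exists_mem_uset_le_of_not_le [Finite L]
    (hdiff : ∀ x y : L, x ⋖ y → ∃ m, MsetDiff x y = {m}) {m a : L} (hm : MeetIrred m)
    (h : ¬ a ≤ m) : ∃ u ∈ Uset m, u ≤ a := by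
  obtain ⟨y, hy, hya⟩ := exists_covBy_le_of_lt (inf_lt_left.2 h)
  obtain ⟨m', hm'⟩ := hdiff _ _ hy
  have hmem : m ∈ MsetDiff (a ⊓ m) y :=
    ⟨hm, inf_le_right, fun hym => hy.lt.not_ge (le_inf hya hym)⟩
  rw [hm', Set.mem_singleton_iff] at hmem
  rw [← hmem] at hm'
  obtain ⟨u, hu, hua⟩ := exists_mem_uset_le hy hm'
  exact ⟨u, hu, hua.trans inf_le_left⟩

theorem le_of_mem_uset {m a : L} (ha : a ∈ Uset m) : a ≤ m := by
  obtain ⟨y, -, hy⟩ := ha.1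
  have : m ∈ MsetDiff a y := hy ▸ rfl
  exact this.2.1

theorem le_of_mem_lset [Finite L] (hdiff : ∀ x y : L, x ⋖ y → ∃ m, MsetDiff x y = {m})
    {m a : L} (hm : MeetIrred m) (ha : a ∈ Lset m) : a ≤ m := by
  by_contra h
  obtain ⟨u, hu, hua⟩ := exists_mem_uset_le_of_not_le hdiff hm h
  exact ha.1 u hu hua

end FiniteLattice

section ULD

variable {L : Type*} [Lattice L] [Fintype L] [BoundedOrder L]

theorem CovBy.le_uplus {x y : L} (h : x ⋖ y) : y ≤ uplus x := by
  have := Finset.le_sup (f := fun y => if x ⋖ y then y else ⊥) (Finset.mem_univ y)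
  simpa [uplus, h] using this

/-- An isomorphism of `[x, x⁺]` with a hypercube sends the covers of `x` to singletons. -/
theorem IsULD.exists_encoding (h : IsULD L) {x : L} (hx : x ≠ ⊤) :
    ∃ (n : ℕ) (e : ↥(Set.Icc x (uplus x)) ≃o Set (Fin n)),
      ∀ y (hy : x ⋖ y), ∃ i, e ⟨y, hy.le, hy.le_uplus⟩ = {i} := by
  obtain ⟨n, ⟨e⟩⟩ := h x hx
  refine ⟨n, e, fun y hy => ?_⟩
  have hbot : ∀ z : ↥(Set.Icc x (uplus x)), (z : L) ≠ x → (e z).Nonempty := by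
    intro z hz
    rw [Set.nonempty_iff_ne_empty]
    intro h0
    apply hz
    have h1 : z ≤ ⟨x, le_rfl, hy.le.trans hy.le_uplus⟩ := by
      rw [← e.le_iff_le, h0]; exact Set.empty_subset _
    exact le_antisymm h1 z.2.1
  obtain ⟨i, hi⟩ := hbot ⟨y, hy.le, hy.le_uplus⟩ hy.lt.ne'
  refine ⟨i, ?_⟩
  have h1 : e.symm {i} ≤ ⟨y, hy.le, hy.le_uplus⟩ := by
    rw [← e.le_iff_le, e.apply_symm_apply]
    exact Set.singleton_subset_iff.2 hi
  have h2 : x ≠ e.symm {i} := by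
    intro h2
    have h3 : e.symm {i} ≤ e.symm ∅ := by
      change ((e.symm {i} : ↥(Set.Icc x (uplus x))) : L) ≤ _
      rw [← h2]; exact (e.symm ∅).2.1
    rw [e.symm.le_iff_le] at h3
    exact h3 rfl
  have h4 := (hy.eq_or_eq (e.symm {i}).2.1 h1).resolve_left h2.symm
  have h5 : e.symm {i} = ⟨y, hy.le, hy.le_uplus⟩ := Subtype.ext h4
  rw [← h5, e.apply_symm_apply]

theorem IsULD.not_le_sup (h : IsULD L) {x p q y : L} (hp : x ⋖ p) (hq : x ⋖ q) (hy : x ⋖ y)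
    (hyp : y ≠ p) (hyq : y ≠ q) : ¬ y ≤ p ⊔ q := by
  obtain ⟨n, e, he⟩ := h.exists_encoding (hp.lt.trans_le le_top).ne
  obtain ⟨i, hi⟩ := he p hp
  obtain ⟨j, hj⟩ := he q hq
  obtain ⟨k, hk⟩ := he y hy
  intro hle
  have h1 : (⟨p, hp.le, hp.le_uplus⟩ : ↥(Set.Icc x (uplus x))) ≤ e.symm {i, j} := by
    rw [← e.le_iff_le, hi, e.apply_symm_apply]; simp
  have h2 : (⟨q, hq.le, hq.le_uplus⟩ : ↥(Set.Icc x (uplus x))) ≤ e.symm {i, j} := by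
    rw [← e.le_iff_le, hj, e.apply_symm_apply]; simp
  have h3 : (⟨y, hy.le, hy.le_uplus⟩ : ↥(Set.Icc x (uplus x))) ≤ e.symm {i, j} :=
    hle.trans (sup_le (Subtype.coe_le_coe.2 h1) (Subtype.coe_le_coe.2 h2))
  rw [← e.le_iff_le, hk, e.apply_symm_apply] at h3
  rcases Set.singleton_subset_iff.1 h3 with rfl | h3
  · exact hyp (congrArg Subtype.val (e.injective (hk.trans hi.symm)))
  · rw [Set.mem_singleton_iff] at h3
    subst h3
    exact hyq (congrArg Subtype.val (e.injective (hk.trans hj.symm)))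

theorem IsULD.covBy_sup_of_covBy_of_covBy (h : IsULD L) {x p q : L} (hp : x ⋖ p) (hq : x ⋖ q)
    (hpq : p ≠ q) : p ⋖ p ⊔ q := by
  obtain ⟨n, e, he⟩ := h.exists_encoding (hp.lt.trans_le le_top).ne
  obtain ⟨i, hi⟩ := he p hp
  obtain ⟨j, hj⟩ := he q hq
  have hlt : p < p ⊔ q := left_lt_sup.2 fun hqp =>
    hpq ((hp.eq_or_eq hq.le hqp).resolve_left hq.lt.ne').symm
  refine ⟨hlt, fun c hpc hcs => ?_⟩
  have h1 : (⟨p, hp.le, hp.le_uplus⟩ : ↥(Set.Icc x (uplus x))) ≤ e.symm {i, j} := by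
    rw [← e.le_iff_le, hi, e.apply_symm_apply]; simp
  have h2 : (⟨q, hq.le, hq.le_uplus⟩ : ↥(Set.Icc x (uplus x))) ≤ e.symm {i, j} := by
    rw [← e.le_iff_le, hj, e.apply_symm_apply]; simp
  have hs : p ⊔ q ≤ e.symm {i, j} :=
    sup_le (Subtype.coe_le_coe.2 h1) (Subtype.coe_le_coe.2 h2)
  let c' : ↥(Set.Icc x (uplus x)) :=
    ⟨c, hp.le.trans hpc.le, hcs.le.trans (sup_le hp.le_uplus hq.le_uplus)⟩
  have hc1 : (⟨p, hp.le, hp.le_uplus⟩ : ↥(Set.Icc x (uplus x))) < c' := hpc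
  have hc2 : c' ≤ e.symm {i, j} := hcs.le.trans hs
  rw [← e.lt_iff_lt, hi] at hc1
  rw [← e.le_iff_le, e.apply_symm_apply] at hc2
  have hjc : j ∈ e c' := by
    obtain ⟨k, hk, hki⟩ := Set.exists_of_ssubset hc1
    rcases hc2 hk with rfl | hkj
    · exact (hki rfl).elim
    · rw [Set.mem_singleton_iff] at hkj
      exact hkj ▸ hk
  have hqc : (⟨q, hq.le, hq.le_uplus⟩ : ↥(Set.Icc x (uplus x))) ≤ c' := by
    rw [← e.le_iff_le, hj]; exact Set.singleton_subset_iff.2 hjc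
  exact hcs.not_ge (sup_le hpc.le hqc)

/-- A finite ULD lattice is upper semimodular. -/
theorem IsULD.covBy_sup (h : IsULD L) {z x y : L} (hzy : z ⋖ y) (hzx : z ≤ x) (hyx : ¬ y ≤ x) :
    x ⋖ x ⊔ y := by
  induction z using WellFoundedGT.induction generalizing y with
  | ind z ih =>
    rcases hzx.eq_or_lt with rfl | hlt
    · rwa [sup_eq_right.2 hzy.le]
    · obtain ⟨p, hp, hpx⟩ := exists_covBy_le_of_lt hlt
      have hpy : p ≠ y := fun hpy => hyx (hpy ▸ hpx)
      have := ih p hp.lt (h.covBy_sup_of_covBy_of_covBy hp hzy hpy) hpx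
        fun hle => hyx (le_sup_right.trans hle)
      rwa [← sup_assoc, sup_eq_left.2 hpx] at this

theorem IsULD.msetDiff_subsingleton (h : IsULD L) {x y : L} (hxy : x ⋖ y) :
    (MsetDiff x y).Subsingleton := by
  induction x using WellFoundedGT.induction generalizing y with
  | ind x ih =>
    intro m hm m' hm'
    have hbase : ∀ m₁ m₂, m₁ ∈ MsetDiff x y → m₂ ∈ MsetDiff x y → x = m₁ → m₁ = m₂ := by
      rintro m₁ m₂ h₁ h₂ rfl
      by_contra hne
      exact h₂.2.2 (h₁.1.le_of_lt_of_covBy hxy (lt_of_le_of_ne h₂.2.1 hne))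
    rcases hm.2.1.eq_or_lt with h0 | hxm
    · exact hbase _ _ hm hm' h0
    rcases hm'.2.1.eq_or_lt with h0 | hxm'
    · exact (hbase _ _ hm' hm h0).symm
    have hstep : ∀ {p}, x ⋖ p → p ≠ y → p ⋖ p ⊔ y := fun hp hpy =>
      h.covBy_sup_of_covBy_of_covBy hp hxy hpy
    have hlift : ∀ {p z m}, m ∈ MsetDiff x z → p ≤ m → m ∈ MsetDiff p (p ⊔ z) :=
      fun hm hp => ⟨hm.1, hp, fun hle => hm.2.2 (le_sup_right.trans hle)⟩
    obtain ⟨p, hp, hpm⟩ := exists_covBy_le_of_lt hxm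
    obtain ⟨q, hq, hqm'⟩ := exists_covBy_le_of_lt hxm'
    have hpy : p ≠ y := fun hpy => hm.2.2 (hpy ▸ hpm)
    have hqy : q ≠ y := fun hqy => hm'.2.2 (hqy ▸ hqm')
    by_cases hpm' : p ≤ m'
    · exact ih p hp.lt (hstep hp hpy) (hlift hm hpm) (hlift hm' hpm')
    by_cases hqm : q ≤ m
    · exact ih q hq.lt (hstep hq hqy) (hlift hm hqm) (hlift hm' hqm')
    have hn := h.not_le_sup hp hq hxy hpy.symm hqy.symm
    obtain ⟨m₀, hm₀, hpq, hym₀⟩ := exists_meetIrred_separating hn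
    have h₀ : m₀ ∈ MsetDiff p (p ⊔ y) :=
      ⟨hm₀, le_sup_left.trans hpq, fun hle => hym₀ (le_sup_right.trans hle)⟩
    have := ih p hp.lt (hstep hp hpy) h₀ (hlift hm hpm)
    exact (hqm (this ▸ le_sup_right.trans hpq)).elim

theorem IsULD.exists_msetDiff_eq (h : IsULD L) (x y : L) (hxy : x ⋖ y) :
    ∃ m, MsetDiff x y = {m} := by
  obtain ⟨m, hm, hxm, hym⟩ := exists_meetIrred_separating hxy.lt.not_ge
  exact ⟨m, (h.msetDiff_subsingleton hxy).eq_singleton_of_mem ⟨hm, hxm, hym⟩⟩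

theorem IsULD.exists_covBy_msetDiff_eq (h : IsULD L) {m u x : L} (hu : u ∈ Uset m) (hux : u ≤ x)
    (hxm : x ≤ m) : ∃ y, x ⋖ y ∧ MsetDiff x y = {m} := by
  obtain ⟨y, huy, hy⟩ := hu.1
  have hm : m ∈ MsetDiff u y := hy ▸ rfl
  have hcov := h.covBy_sup huy hux fun hyx => hm.2.2 (hyx.trans hxm)
  exact ⟨_, hcov, (h.msetDiff_subsingleton hcov).eq_singleton_of_mem
    ⟨hm.1, hxm, fun hle => hm.2.2 (le_sup_right.trans hle)⟩⟩

end ULD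

section Reachability

variable {V : Type*} {E : V → V → ℕ}

theorem validSeq_append {c : V → ℕ} {l₁ l₂ : List V} :
    ValidSeq E c (l₁ ++ l₂) ↔ ValidSeq E c l₁ ∧ ValidSeq E (fireList E c l₁) l₂ := by
  induction l₁ generalizing c with
  | nil => simp [ValidSeq, fireList]
  | cons v l ih => simp [ValidSeq, fireList, ih, and_assoc]

theorem fireList_append (c : V → ℕ) (l₁ l₂ : List V) :
    fireList E c (l₁ ++ l₂) = fireList E (fireList E c l₁) l₂ := by
  induction l₁ generalizing c with
  | nil => rfl
  | cons v l ih => simp [fireList, ih]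

theorem Reaches.refl (c : V → ℕ) : Reaches E c c := ⟨[], trivial, rfl⟩

theorem Reaches.trans {c₁ c₂ c₃ : V → ℕ} (h : Reaches E c₁ c₂) (h' : Reaches E c₂ c₃) :
    Reaches E c₁ c₃ := by
  obtain ⟨l, hl, rfl⟩ := h
  obtain ⟨l', hl', rfl⟩ := h'
  exact ⟨l ++ l', validSeq_append.2 ⟨hl, hl'⟩, fireList_append _ _ _⟩

theorem Firable.reaches {c : V → ℕ} {v : V} (h : Firable E c v) : Reaches E c (fire E c v) :=
  ⟨[v], ⟨h, trivial⟩, rfl⟩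

end Reachability

section SandpileOfSystem

variable {I : Type}

/-- The edge multiplicities of the sandpile model on `I` with an added sink `none`. -/
def sinkGraph (g : I → I → ℕ) (N : ℕ) : Option I → Option I → ℕ
  | none, _ => 0
  | some _, none => N
  | some i, some j => g i j

theorem outDeg_sinkGraph_none (g : I → I → ℕ) (N : ℕ) : outDeg (sinkGraph g N) none = 0 := by
  simp [outDeg, sinkGraph]

variable [Fintype I]

theorem outDeg_sinkGraph_some (g : I → I → ℕ) (N : ℕ) (i : I) :
    outDeg (sinkGraph g N) (some i) = N + ∑ j, g i j := by
  simp [outDeg, sinkGraph, finsum_eq_sum_of_fintype, Fintype.sum_option]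

theorem isASM_sinkGraph {g : I → I → ℕ} {N : ℕ} (hg : ∀ i j, g i j = g j i)
    (hdiag : ∀ i, g i i = 0) (hN : 0 < N) : IsASM (sinkGraph g N) := by
  refine ⟨fun u v => ?_, none, outDeg_sinkGraph_none g N, fun v hv => ?_, fun v₁ v₂ _ h₁ h₂ => ?_⟩
  · have h1 : ∀ u, Relation.ReflTransGen
        (fun a b => 0 < sinkGraph g N a b ∨ 0 < sinkGraph g N b a) u none := by
      rintro (_ | i)
      · exact .refl
      · exact .single (Or.inl hN)
    have h2 : Relation.ReflTransGen
        (fun a b => 0 < sinkGraph g N a b ∨ 0 < sinkGraph g N b a) none v := by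
      rcases v with _ | i
      · exact .refl
      · exact .single (Or.inr hN)
    exact (h1 u).trans h2
  · cases v with
    | none => rfl
    | some i =>
      rw [IsSink, outDeg_sinkGraph_some] at hv
      simp only [sinkGraph, hdiag] at hv
      omega
  · cases v₁ <;> cases v₂ <;> simp_all [sinkGraph]

/-- The configuration in which exactly the vertices of `S` have been fired, vertex `i` being
firable once it has received `w i` chips. -/
noncomputable def firedConfig (g : I → I → ℕ) (N : ℕ) (w : I → ℕ) (S : Finset I) : Option I → ℕ
  | none => N * S.card
  | some i =>
    if i ∈ S then ∑ j ∈ S, g j i - w i else N + ∑ j, g i j - w i + ∑ j ∈ S, g j i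

variable {g : I → I → ℕ} {N : ℕ} {w : I → ℕ} {S : Finset I}

theorem sum_le_sum_univ_of_symm (hg : ∀ i j, g i j = g j i) (S : Finset I) (i : I) :
    ∑ j ∈ S, g j i ≤ ∑ j, g i j := by
  simp only [hg i]
  exact Finset.sum_le_sum_of_subset (Finset.subset_univ _)

theorem firable_firedConfig_iff (hg : ∀ i j, g i j = g j i) (hdiag : ∀ i, g i i = 0)
    (hN : ∀ i, w i < N) (v : Option I) :
    Firable (sinkGraph g N) (firedConfig g N w S) v ↔
      ∃ i, v = some i ∧ i ∉ S ∧ w i ≤ ∑ j ∈ S, g j i := by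
  cases v with
  | none => simp [Firable, IsSink, outDeg_sinkGraph_none, sinkGraph]
  | some i =>
    have h1 := sum_le_sum_univ_of_symm hg S i
    have h2 := hN i
    simp only [Firable, IsSink, outDeg_sinkGraph_some, sinkGraph, hdiag, firedConfig,
      Option.some.injEq]
    rw [exists_eq_left']
    split_ifs with hi
    · simp only [hi, not_true, false_and, iff_false, not_and]
      omega
    · simp only [hi, not_false_eq_true, true_and]
      omega

theorem fire_firedConfig (hdiag : ∀ i, g i i = 0)
    (hN : ∀ i, w i < N) (hS : ∀ i ∈ S, w i ≤ ∑ j ∈ S, g j i) {i : I} (hi : i ∉ S)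
    (hw : w i ≤ ∑ j ∈ S, g j i) :
    fire (sinkGraph g N) (firedConfig g N w S) (some i) = firedConfig g N w (insert i S) := by
  funext v
  cases v with
  | none => simp [fire, firedConfig, sinkGraph, hi, mul_add]
  | some j =>
    have h2 := hN i
    by_cases hji : j = i
    · subst hji
      simp only [fire, if_true, firedConfig, hi, if_false, outDeg_sinkGraph_some, sinkGraph, hdiag,
        Finset.mem_insert_self, Finset.sum_insert hi]
      omega
    · have h1 := hS j
      simp only [fire, Option.some.injEq, hji, if_false, firedConfig, sinkGraph,
        Finset.mem_insert, false_or, Finset.sum_insert hi]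
      split_ifs with hj
      · have := h1 hj
        omega
      · omega

theorem firedConfig_injective (hg : ∀ i j, g i j = g j i) (hN : ∀ i, w i < N) :
    Function.Injective (firedConfig g N w) := by
  have key : ∀ S T, firedConfig g N w S = firedConfig g N w T → S ⊆ T := by
    intro S T h i hi
    by_contra hiT
    have h1 := congrFun h (some i)
    have h2 := sum_le_sum_univ_of_symm hg S i
    have h3 := hN i
    simp only [firedConfig, hi, hiT, if_true, if_false] at h1
    omega
  exact fun S T h => (key S T h).antisymm (key T S h.symm)

theorem memLASM_of_firedSets {L : Type*} [Lattice L] [Finite L] [BoundedOrder L]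
    (F : L → Finset I) (g : I → I → ℕ) (w : I → ℕ)
    (hg : ∀ i j, g i j = g j i) (hdiag : ∀ i, g i i = 0)
    (hF : ∀ a b, a ≤ b ↔ F a ⊆ F b)
    (hcov : ∀ a b, a ⋖ b → ∃ i, i ∉ F a ∧ F b = insert i (F a) ∧ w i ≤ ∑ j ∈ F a, g j i)
    (hfired : ∀ a, ∀ i ∈ F a, w i ≤ ∑ j ∈ F a, g j i)
    (hfire : ∀ a i, i ∉ F a → w i ≤ ∑ j ∈ F a, g j i → ∃ b, F b = insert i (F a)) :
    MemLASM L := by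
  let N := 1 + ∑ i, w i
  have hN : ∀ i, w i < N := fun i => by
    have := Finset.single_le_sum (f := w) (fun _ _ => Nat.zero_le _) (Finset.mem_univ i)
    omega
  let C : L → Option I → ℕ := fun a => firedConfig g N w (F a)
  have hCinj : Function.Injective C := fun a b h => by
    have := firedConfig_injective hg hN h
    exact le_antisymm ((hF a b).2 this.subset) ((hF b a).2 this.symm.subset)
  have hreach_of_le : ∀ a b, a ≤ b → Reaches (sinkGraph g N) (C a) (C b) := by
    intro a b hab
    induction a using WellFoundedGT.induction with
    | ind a ih =>
      rcases hab.eq_or_lt with rfl | hlt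
      · exact Reaches.refl _
      · obtain ⟨c, hac, hcb⟩ := exists_covBy_le_of_lt hlt
        obtain ⟨i, hi, hFc, hw⟩ := hcov a c hac
        have h1 := ((firable_firedConfig_iff hg hdiag hN (some i)).2 ⟨i, rfl, hi, hw⟩).reaches
        rw [fire_firedConfig hdiag hN (hfired a) hi hw, ← hFc] at h1
        exact h1.trans (ih c hac.lt hcb)
  have hof_reach : ∀ a c, Reaches (sinkGraph g N) (C a) c → ∃ b, a ≤ b ∧ C b = c := by
    rintro a c ⟨l, hl, rfl⟩
    induction l generalizing a with
    | nil => exact ⟨a, le_rfl, rfl⟩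
    | cons v l ih =>
      obtain ⟨hv, hl⟩ := hl
      obtain ⟨i, rfl, hi, hw⟩ := (firable_firedConfig_iff hg hdiag hN v).1 hv
      obtain ⟨b, hb⟩ := hfire a i hi hw
      have hab : a ≤ b := (hF a b).2 (hb ▸ Finset.subset_insert _ _)
      have hCb : fire (sinkGraph g N) (C a) (some i) = C b := by
        simp only [C, hb]
        exact fire_firedConfig hdiag hN (hfired a) hi hw
      rw [hCb] at hl
      obtain ⟨d, hbd, hd⟩ := ih b hl
      refine ⟨d, hab.trans hbd, ?_⟩
      rw [hd, fireList, hCb]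
  refine ⟨Option I, inferInstance, sinkGraph g N, C ⊥, isASM_sinkGraph hg hdiag (by omega),
    ⟨C ⊤, hreach_of_le _ _ bot_le, fun v hv => ?_, fun c hc => ?_⟩, ?_⟩
  · obtain ⟨i, rfl, hi, hw⟩ := (firable_firedConfig_iff hg hdiag hN v).1 hv
    obtain ⟨b, hb⟩ := hfire ⊤ i hi hw
    exact hi ((hF b ⊤).1 le_top (hb ▸ Finset.mem_insert_self _ _))
  · obtain ⟨b, -, rfl⟩ := hof_reach _ _ hc
    exact hreach_of_le _ _ le_top
  · refine ⟨Equiv.ofBijective (fun a => ⟨C a, hreach_of_le _ _ bot_le⟩)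
      ⟨fun a b h => hCinj (congrArg Subtype.val h), fun c => ?_⟩, fun a b => ⟨hreach_of_le a b,
        fun h => ?_⟩⟩
    · obtain ⟨b, -, hb⟩ := hof_reach _ _ c.2
      exact ⟨b, Subtype.ext hb⟩
    · obtain ⟨d, had, hd⟩ := hof_reach a _ h
      exact had.trans_eq (hCinj hd)

end SandpileOfSystem

section OmegaToSandpile

variable {L : Type*} [Lattice L]

theorem finsum_mem_mnotAbove {I : Type} [Fintype I] (φ : I ≃ {m : L // MeetIrred m}) (a : L)
    (e : L → ℕ) :
    ∑ᶠ x ∈ MnotAbove a, e x = ∑ i with ¬ a ≤ (φ i : L), e (φ i) := by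
  have himage : MnotAbove a =
      (fun i => (φ i : L)) '' (({i | ¬ a ≤ (φ i : L)} : Finset I) : Set I) := by
    ext x
    constructor
    · intro hx
      exact ⟨φ.symm ⟨x, hx.1⟩, by simpa using hx.2, by simp⟩
    · rintro ⟨i, hi, rfl⟩
      exact ⟨(φ i).2, by simpa using hi⟩
  have hinj : Function.Injective fun i => (φ i : L) := Subtype.val_injective.comp φ.injective
  rw [himage, finsum_mem_image hinj.injOn, finsum_mem_coe_finset]

variable [BoundedOrder L]

/-- Edge multiplicities read off from a solution of `Ω`, completed by symmetry. -/
noncomputable def omegaEdge (Ee : L → L → ℕ) (x m : L) : ℕ :=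
  if VarOccurs x m then Ee x m else if VarOccurs m x then Ee m x else 0

/-- The number of chips a vertex misses in the initial configuration. -/
noncomputable def omegaThreshold (W : L → ℕ) (m : L) : ℕ :=
  if Uset m = {(⊥ : L)} then 0 else W m

theorem omegaEdge_comm {W : L → ℕ} {Ee : L → L → ℕ} (h : SolvesOmega W Ee) (x m : L) :
    omegaEdge Ee x m = omegaEdge Ee m x := by
  by_cases hxm : x = m
  · rw [hxm]
  · have := h.2 x m hxm
    unfold omegaEdge
    split_ifs <;> simp_all

variable [Fintype L]

theorem omegaEdge_self (hULD : IsULD L) (Ee : L → L → ℕ) (m : L) : omegaEdge Ee m m = 0 := by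
  have h : ¬ VarOccurs m m := by
    rintro ⟨hm, -, a, ha | ha, ham⟩
    · exact ham.2 (le_of_mem_uset ha)
    · exact ham.2 (le_of_mem_lset hULD.exists_msetDiff_eq hm ha)
  simp [omegaEdge, h]

theorem omegaThreshold_le_iff {W : L → ℕ} {Ee : L → L → ℕ} (h : SolvesOmega W Ee) {I : Type}
    [Fintype I] (φ : I ≃ {m : L // MeetIrred m}) {m : L} (hm : MeetIrred m) (a : L) :
    omegaThreshold W m ≤ ∑ i with ¬ a ≤ (φ i : L), omegaEdge Ee (φ i) m ↔
      ∃ u ∈ Uset m, u ≤ a := by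
  by_cases hU : Uset m = {(⊥ : L)}
  · simp [omegaThreshold, hU]
  have hsys := (h.1 m hm).2 hU
  have hsum : ∀ b ∈ Uset m ∪ Lset m,
      ∑ i with ¬ b ≤ (φ i : L), omegaEdge Ee (φ i) m = ∑ᶠ x ∈ MnotAbove b, Ee x m := by
    intro b hb
    rw [finsum_mem_mnotAbove φ]
    refine Finset.sum_congr rfl fun i hi => ?_
    have : VarOccurs (φ i : L) m := ⟨hm, hU, b, hb, (φ i).2, by simpa using hi⟩
    simp [omegaEdge, this]
  have hmono : ∀ b c : L, b ≤ c → ∑ i with ¬ b ≤ (φ i : L), omegaEdge Ee (φ i) m ≤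
      ∑ i with ¬ c ≤ (φ i : L), omegaEdge Ee (φ i) m := fun b c hbc =>
    Finset.sum_le_sum_of_subset fun i => by
      simpa using fun hb hc => hb (hbc.trans hc)
  simp only [omegaThreshold, hU, if_false]
  constructor
  · intro hle
    by_contra hno
    push Not at hno
    obtain ⟨b, hab, hb⟩ :=
      (Set.toFinite {z : L | ∀ u ∈ Uset m, ¬ u ≤ z}).exists_le_maximal hno
    have h1 := hsys.1 b hb
    rw [← hsum b (Or.inr hb)] at h1
    exact (hle.trans (hmono a b hab)).not_gt h1
  · rintro ⟨u, hu, hua⟩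
    have h1 := hsys.2 u hu
    rw [← hsum u (Or.inl hu)] at h1
    exact h1.trans (hmono u a hua)

theorem memLASM_of_solvesOmega (hULD : IsULD L) {W : L → ℕ} {Ee : L → L → ℕ}
    (h : SolvesOmega W Ee) {I : Type} [Fintype I] (φ : I ≃ {m : L // MeetIrred m}) :
    MemLASM L := by
  have hinsert : ∀ {a b : L} {i : I}, a ≤ b → MsetDiff a b = {(φ i : L)} →
      ({j | ¬ b ≤ (φ j : L)} : Finset I) = insert i ({j | ¬ a ≤ (φ j : L)} : Finset I) := by
    intro a b i hab hi
    have h1 := mnotAbove_eq_insert hab hi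
    ext j
    have h2 : (φ j : L) ∈ MnotAbove b ↔ _ := Set.ext_iff.1 h1 (φ j)
    simpa [MnotAbove, (φ j).2, Subtype.val_inj] using h2
  refine memLASM_of_firedSets (fun a => ({i | ¬ a ≤ (φ i : L)} : Finset I))
    (fun i j => omegaEdge Ee (φ i) (φ j)) (fun i => omegaThreshold W (φ i))
    (fun i j => omegaEdge_comm h _ _) (fun i => omegaEdge_self hULD _ _) (fun a b => ?_)
    (fun a b hab => ?_) (fun a i hi => ?_) (fun a i hi hw => ?_)
  · rw [le_iff_mnotAbove_subset]
    constructor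
    · intro hs i hi
      simp only [Finset.mem_filter, Finset.mem_univ, true_and] at hi ⊢
      exact (hs ⟨(φ i).2, hi⟩).2
    · intro hs x hx
      have := @hs (φ.symm ⟨x, hx.1⟩) (by simpa using hx.2)
      exact ⟨hx.1, by simpa using this⟩
  · obtain ⟨m, hm⟩ := hULD.exists_msetDiff_eq a b hab
    have hmem : m ∈ MsetDiff a b := hm ▸ rfl
    obtain ⟨i, hi⟩ := φ.surjective ⟨m, hmem.1⟩
    obtain rfl : (φ i : L) = m := congrArg Subtype.val hi
    refine ⟨i, by simpa using hmem.2.1, hinsert hab.le hm, ?_⟩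
    exact (omegaThreshold_le_iff h φ (φ i).2 a).2 (exists_mem_uset_le hab hm)
  · exact (omegaThreshold_le_iff h φ (φ i).2 a).2
      (exists_mem_uset_le_of_not_le hULD.exists_msetDiff_eq (φ i).2 (by simpa using hi))
  · obtain ⟨u, hu, hua⟩ := (omegaThreshold_le_iff h φ (φ i).2 a).1 hw
    obtain ⟨b, hab, hb⟩ := hULD.exists_covBy_msetDiff_eq hu hua (by simpa using hi)
    exact ⟨b, hinsert hab.le hb⟩

end OmegaToSandpile

section ShotVectors

variable {V : Type*} {E : V → V → ℕ}

theorem fire_add {c : V → ℕ} {v : V} (h : Firable E c v) (u : V) :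
    fire E c v u + (if v = u then 1 else 0) * outDeg E u = c u + E v u := by
  have := h.2
  unfold fire
  by_cases huv : u = v
  · subst huv
    simp
    omega
  · simp [huv, Ne.symm huv]

variable [Fintype V]

theorem outDeg_eq_sum (E : V → V → ℕ) (v : V) : outDeg E v = ∑ u, E v u :=
  finsum_eq_sum_of_fintype _

theorem loop_le_outDeg (E : V → V → ℕ) (v : V) : E v v ≤ outDeg E v := by
  rw [outDeg_eq_sum]
  exact Finset.single_le_sum (f := E v) (fun _ _ => Nat.zero_le _) (Finset.mem_univ v)

theorem fireList_add_count {c : V → ℕ} {l : List V} (h : ValidSeq E c l) (u : V) :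
    fireList E c l u + l.count u * outDeg E u = c u + ∑ v, l.count v * E v u := by
  induction l generalizing c with
  | nil => simp [fireList]
  | cons v l ih =>
    have h1 := ih h.2
    have h2 := fire_add h.1 u
    have h3 : ∑ x, (v :: l).count x * E x u = ∑ x, l.count x * E x u + E v u := by
      simp [List.count_cons, add_mul, Finset.sum_add_distrib]
    rw [h3, fireList, List.count_cons, add_mul]
    simp only [beq_iff_eq]
    omega

theorem fireList_eq_of_count_eq {c : V → ℕ} {l₁ l₂ : List V} (h₁ : ValidSeq E c l₁)
    (h₂ : ValidSeq E c l₂) (h : ∀ v, l₁.count v = l₂.count v) :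
    fireList E c l₁ = fireList E c l₂ := by
  funext u
  have := fireList_add_count h₁ u
  have := fireList_add_count h₂ u
  simp only [h] at *
  omega

/-- Any two valid firing sequences can be merged: the first one extends to a sequence whose
firing counts are the pointwise maxima. -/
theorem exists_extension_max {c : V → ℕ} {l₁ l₂ : List V} (h₁ : ValidSeq E c l₁)
    (h₂ : ValidSeq E c l₂) :
    ∃ l₃, ValidSeq E c (l₁ ++ l₃) ∧ ∀ v, (l₁ ++ l₃).count v = max (l₁.count v) (l₂.count v) := by
  induction l₂ using List.reverseRecOn with
  | nil => exact ⟨[], by simpa using h₁, by simp⟩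
  | append_singleton l v ih =>
    obtain ⟨hl, hv⟩ := validSeq_append.1 h₂
    obtain ⟨l₃, hl₃, hcount⟩ := ih hl
    by_cases hle : (l ++ [v]).count v ≤ l₁.count v
    · refine ⟨l₃, hl₃, fun u => ?_⟩
      rw [hcount]
      by_cases huv : v = u
      · subst huv
        simp at hle ⊢
        omega
      · simp [huv]
    · have hcv : (l₁ ++ l₃).count v = l.count v := by
        have := hcount v
        simp at hle this ⊢
        omega
      have hfire : Firable E (fireList E c (l₁ ++ l₃)) v := by
        refine ⟨hv.1.1, hv.1.2.trans ?_⟩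
        have h3 := fireList_add_count hl₃ v
        have h4 := fireList_add_count hl v
        have h5 : ∑ u, l.count u * E u v ≤ ∑ u, (l₁ ++ l₃).count u * E u v :=
          Finset.sum_le_sum fun u _ => Nat.mul_le_mul_right _ (by rw [hcount]; exact le_max_right _ _)
        rw [hcv] at h3
        omega
      refine ⟨l₃ ++ [v], ?_, fun u => ?_⟩
      · rw [← List.append_assoc]
        exact validSeq_append.2 ⟨hl₃, hfire, trivial⟩
      · rw [← List.append_assoc, List.count_append, hcount]
        by_cases huv : v = u
        · subst huv
          simp at hle hcv ⊢
          omega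
        · simp [huv]

theorem count_le_of_fixedPt {c : V → ℕ} {l₁ l₂ : List V} (h₁ : ValidSeq E c l₁)
    (h₂ : ValidSeq E c l₂) (hfix : FixedPt E (fireList E c l₁)) (v : V) :
    l₂.count v ≤ l₁.count v := by
  obtain ⟨l₃, hl₃, hcount⟩ := exists_extension_max h₁ h₂
  cases l₃ with
  | nil => simpa using hcount v
  | cons u l => exact (hfix u (validSeq_append.1 hl₃).2.1).elim

theorem count_eq_of_fireList_eq {O : V → ℕ} (hO : ReachesUFP E O) {l₁ l₂ : List V}
    (h₁ : ValidSeq E O l₁) (h₂ : ValidSeq E O l₂) (h : fireList E O l₁ = fireList E O l₂) (v : V) :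
    l₁.count v = l₂.count v := by
  obtain ⟨fp, -, hfix, hreach⟩ := hO
  obtain ⟨l, hl, hlfp⟩ := hreach _ ⟨l₁, h₁, rfl⟩
  have v₁ : ValidSeq E O (l₁ ++ l) := validSeq_append.2 ⟨h₁, hl⟩
  have v₂ : ValidSeq E O (l₂ ++ l) := validSeq_append.2 ⟨h₂, h ▸ hl⟩
  have f₁ : FixedPt E (fireList E O (l₁ ++ l)) := by rwa [fireList_append, hlfp]
  have f₂ : FixedPt E (fireList E O (l₂ ++ l)) := by rwa [fireList_append, ← h, hlfp]
  have a := count_le_of_fixedPt v₁ v₂ f₁ v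
  have b := count_le_of_fixedPt v₂ v₁ f₂ v
  simp only [List.count_append] at a b
  omega

/-- `K` records how often each vertex has been fired, in a chip firing game with configuration
space `L`. -/
structure IsShotVector {L : Type*} [Lattice L] (E : V → V → ℕ) (O : V → ℕ) (K : L → V → ℕ) :
    Prop where
  le_iff : ∀ a b, a ≤ b ↔ K a ≤ K b
  sup_eq : ∀ a b, K (a ⊔ b) = K a ⊔ K b
  exists_of_covBy : ∀ a b, a ⋖ b → ∃ v, K b = K a + Pi.single v 1
  fire_iff : ∀ a v, (∃ b, K b = K a + Pi.single v 1) ↔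
    ¬ IsSink E v ∧ outDeg E v * (K a v + 1) ≤ O v + ∑ u, K a u * E u v
  exists_eq_zero : ∃ a, K a = 0

theorem exists_isShotVector {L : Type*} [Lattice L] {O : V → ℕ} (hO : ReachesUFP E O)
    (hL : Generates E O L) : ∃ K : L → V → ℕ, IsShotVector E O K := by
  obtain ⟨f, hf⟩ := hL
  choose l hl hlf using fun a => (f a).2
  let K : L → V → ℕ := fun a v => (l a).count v
  have huniq : ∀ a l', ValidSeq E O l' → fireList E O l' = f a → K a = fun v => l'.count v :=
    fun a l' h h' => funext fun v => count_eq_of_fireList_eq hO (hl a) h ((hlf a).trans h'.symm) v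
  have hsurj : ∀ l', ValidSeq E O l' → ∃ a, fireList E O l' = f a ∧ K a = fun v => l'.count v := by
    intro l' h
    obtain ⟨a, ha⟩ := f.surjective ⟨_, l', h, rfl⟩
    have ha' : fireList E O l' = f a := by rw [ha]
    exact ⟨a, ha', huniq a l' h ha'⟩
  have hcons : ∀ a l', ValidSeq E (f a).1 l' →
      ∃ b, fireList E (f a).1 l' = f b ∧ a ≤ b ∧ K b = K a + fun v => l'.count v := by
    intro a l' h
    obtain ⟨b, hb, hK⟩ := hsurj (l a ++ l') (validSeq_append.2 ⟨hl a, (hlf a).symm ▸ h⟩)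
    rw [fireList_append, hlf] at hb
    refine ⟨b, hb, (hf a b).2 ⟨l', h, hb⟩, ?_⟩
    rw [hK]
    funext v
    simp [K]
  have hle : ∀ a b, a ≤ b ↔ K a ≤ K b := by
    intro a b
    constructor
    · intro hab
      obtain ⟨l', h, h'⟩ := (hf a b).1 hab
      obtain ⟨c, hc, -, hK⟩ := hcons a l' h
      obtain rfl : c = b := f.injective (Subtype.ext (hc.symm.trans h'))
      rw [hK]
      exact le_self_add
    · intro hab
      obtain ⟨l₃, h₃, hcount⟩ := exists_extension_max (hl a) (hl b)
      have heq : fireList E O (l a ++ l₃) = f b := by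
        rw [← hlf b]
        exact fireList_eq_of_count_eq h₃ (hl b)
          fun v => (hcount v).trans (max_eq_right (hab v))
      rw [fireList_append, hlf] at heq
      exact (hf a b).2 ⟨l₃, (hlf a) ▸ (validSeq_append.1 h₃).2, heq⟩
  have hinj : Function.Injective K := fun a b h =>
    le_antisymm ((hle a b).2 h.le) ((hle b a).2 h.ge)
  have hsingle : ∀ v : V, (fun u => [v].count u) = (Pi.single v 1 : V → ℕ) := by
    intro v
    funext u
    by_cases huv : v = u
    · simp [huv]
    · simp [huv, Ne.symm huv]
  have hfirable : ∀ a v, Firable E (f a).1 v ↔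
      ¬ IsSink E v ∧ outDeg E v * (K a v + 1) ≤ O v + ∑ u, K a u * E u v := by
    intro a v
    have h := fireList_add_count (hl a) v
    rw [hlf] at h
    rw [Firable]
    refine and_congr_right fun _ => ?_
    change _ + K a v * _ = O v + ∑ u, K a u * E u v at h
    rw [← h, mul_comm, add_mul, one_mul]
    omega
  have hstep : ∀ a v, Firable E (f a).1 v → ∃ b, a ≤ b ∧ fire E (f a).1 v = f b ∧
      K b = K a + Pi.single v 1 := by
    intro a v h
    obtain ⟨b, hb, hab, hK⟩ := hcons a [v] ⟨h, trivial⟩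
    exact ⟨b, hab, hb, hK.trans (by rw [hsingle])⟩
  have hlt_step : ∀ a b, a < b → ∃ v c, Firable E (f a).1 v ∧ c ≤ b ∧ a ≤ c ∧
      K c = K a + Pi.single v 1 := by
    intro a b hab
    obtain ⟨l', h, h'⟩ := (hf a b).1 hab.le
    cases l' with
    | nil => exact (hab.ne (f.injective (Subtype.ext h'))).elim
    | cons v t =>
      obtain ⟨c, hac, hc, hK⟩ := hstep a v h.1
      exact ⟨v, c, h.1, (hf c b).2 ⟨t, hc ▸ h.2, hc ▸ h'⟩, hac, hK⟩
  refine ⟨K, hle, fun a b => ?_, fun a b hab => ?_, fun a v => ?_, ?_⟩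
  · obtain ⟨l₃, h₃, hcount⟩ := exists_extension_max (hl a) (hl b)
    obtain ⟨c, -, hc⟩ := hsurj _ h₃
    have hc' : K c = K a ⊔ K b := hc.trans (funext hcount)
    have : a ⊔ b = c := le_antisymm
      (sup_le ((hle _ _).2 (hc' ▸ le_sup_left)) ((hle _ _).2 (hc' ▸ le_sup_right)))
      ((hle _ _).2 (hc' ▸ sup_le ((hle _ _).1 le_sup_left) ((hle _ _).1 le_sup_right)))
    rw [this, hc']
  · obtain ⟨v, c, -, hcb, hac, hK⟩ := hlt_step a b hab.lt
    rcases hab.eq_or_eq hac hcb with rfl | rfl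
    · simpa using congrFun hK v
    · exact ⟨v, hK⟩
  · rw [← hfirable]
    constructor
    · rintro ⟨b, hb⟩
      have hab : a < b := by
        refine lt_of_le_of_ne ((hle a b).2 (hb ▸ le_self_add)) ?_
        rintro rfl
        simpa using congrFun hb v
      obtain ⟨u, c, hu, hcb, -, hc⟩ := hlt_step a b hab
      have h1 := (hle c b).1 hcb u
      rw [hc, hb] at h1
      obtain rfl : u = v := by
        by_contra huv
        simp [huv] at h1
      exact hu
    · intro h
      obtain ⟨b, -, -, hb⟩ := hstep a v h
      exact ⟨b, hb⟩
  · obtain ⟨a, -, ha⟩ := hsurj [] trivial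
    exact ⟨a, ha.trans (by funext; simp)⟩

end ShotVectors

section SandpileToOmega

variable {V : Type*} [Fintype V] {E : V → V → ℕ} {O : V → ℕ} {L : Type*} [Lattice L]
  {K : L → V → ℕ}

namespace IsShotVector

theorem covBy (hK : IsShotVector E O K) {a b : L} {v : V} (h : K b = K a + Pi.single v 1) :
    a ⋖ b := by
  refine ⟨lt_of_le_not_ge ((hK.le_iff a b).2 (h ▸ le_self_add)) fun hba => ?_, fun c hac hcb => ?_⟩
  · have := (hK.le_iff b a).1 hba v
    rw [h] at this
    simp at this
  · have h1 := (hK.le_iff a c).1 hac.le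
    have h2 := (hK.le_iff c b).1 hcb.le
    have hne : ∀ u, u ≠ v → K c u = K a u := fun u hu => by
      have h3 := h2 u
      simp only [h, Pi.add_apply, Pi.single_eq_of_ne hu, add_zero] at h3
      exact le_antisymm h3 (h1 u)
    rcases (h1 v).lt_or_eq with hlt | heq
    · refine hcb.not_ge ((hK.le_iff b c).2 fun u => ?_)
      by_cases hu : u = v
      · subst hu
        simpa [h] using hlt
      · simp [h, hu, hne u hu]
    · refine hac.not_ge ((hK.le_iff c a).2 fun u => ?_)
      by_cases hu : u = v
      · exact hu ▸ heq.ge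
      · exact (hne u hu).le

theorem eq_add_single_of_msetDiff_eq (hK : IsShotVector E O K) {z y m : L} {v : V} (hzy : z ⋖ y)
    (h : MsetDiff z y = {m}) (hchar : ∀ x, x ≤ m ↔ K x v ≤ K m v) :
    K y = K z + Pi.single v 1 ∧ K z v = K m v := by
  obtain ⟨u, hu⟩ := hK.exists_of_covBy z y hzy
  have hm : m ∈ MsetDiff z y := h ▸ rfl
  have h1 := (hchar z).1 hm.2.1
  have h2 : K m v < K y v := not_le.1 fun h => hm.2.2 ((hchar y).2 h)
  have huv : u = v := by
    by_contra huv
    simp [hu, Ne.symm huv] at h2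
    omega
  subst huv
  simp [hu] at h2
  exact ⟨hu, by omega⟩

variable [Finite L]

/-- The meet-irreducible attached to a firing of `v` is the largest element in which `v` has not
yet been fired that many times. -/
theorem exists_msetDiff_eq (hK : IsShotVector E O K) {a b : L} {v : V}
    (h : K b = K a + Pi.single v 1) :
    ∃ m, MsetDiff a b = {m} ∧ ∀ x, x ≤ m ↔ K x v ≤ K a v := by
  obtain ⟨m, ham, hm⟩ :=
    (Set.toFinite {x : L | K x v ≤ K a v}).exists_le_maximal (a := a) (le_refl (K a v))
  have hchar : ∀ x, x ≤ m ↔ K x v ≤ K a v := by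
    refine fun x => ⟨fun hx => ((hK.le_iff x m).1 hx v).trans hm.1, fun hx => ?_⟩
    have hmem : x ⊔ m ∈ {x : L | K x v ≤ K a v} := by
      simpa [hK.sup_eq] using ⟨hx, hm.1⟩
    exact le_sup_left.trans (hm.2 hmem le_sup_right)
  have hKbv : K b v = K a v + 1 := by simp [h]
  have hbm : ¬ b ≤ m := by
    rw [hchar, hKbv]
    omega
  have hsup : ∀ x, a ≤ x → ¬ b ≤ x → K x v = K a v ∧ K (b ⊔ x) = K x + Pi.single v 1 := by
    intro x hax hbx
    have h1 := (hK.le_iff a x).1 hax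
    have hv : K x v = K a v := by
      refine le_antisymm (not_lt.1 fun hlt => hbx ((hK.le_iff b x).2 fun u => ?_)) (h1 v)
      by_cases hu : u = v
      · subst hu
        exact hKbv.trans_le hlt
      · simpa [h, hu] using h1 u
    refine ⟨hv, ?_⟩
    rw [hK.sup_eq]
    funext u
    by_cases hu : u = v
    · subst hu
      simp [hKbv, hv]
    · simpa [h, hu] using h1 u
  refine ⟨m, Set.eq_singleton_iff_unique_mem.2 ⟨⟨⟨b ⊔ m, ?_, ?_⟩, ham, hbm⟩, ?_⟩, hchar⟩
  · exact hK.covBy (hsup m ham hbm).2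
  · intro z hz
    have hbz : b ≤ z := by
      by_contra hbz
      exact hz.lt.not_ge ((hchar z).2 (hsup z (ham.trans hz.le) hbz).1.le)
    have hlt : m < b ⊔ m := right_lt_sup.2 hbm
    exact ((hz.eq_or_eq hlt.le (sup_le hbz hz.le)).resolve_left hlt.ne').symm
  · rintro m' ⟨hm', ham', hbm'⟩
    by_contra hne
    have hlt := lt_of_le_of_ne ((hchar m').2 (hsup m' ham' hbm').1.le) hne
    exact hbm (le_sup_left.trans
      (hm'.le_of_lt_of_covBy (hK.covBy (hsup m' ham' hbm').2) hlt))

theorem exists_msetDiff_eq_of_covBy (hK : IsShotVector E O K) (a b : L) (hab : a ⋖ b) :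
    ∃ m, MsetDiff a b = {m} := by
  obtain ⟨v, hv⟩ := hK.exists_of_covBy a b hab
  obtain ⟨m, hm, -⟩ := hK.exists_msetDiff_eq hv
  exact ⟨m, hm⟩

theorem exists_label (hK : IsShotVector E O K) {m : L} (hm : MeetIrred m) :
    ∃ v, ¬ IsSink E v ∧ ∀ x, x ≤ m ↔ K x v ≤ K m v := by
  obtain ⟨y, hy, -⟩ := id hm
  obtain ⟨v, hv⟩ := hK.exists_of_covBy m y hy
  obtain ⟨m', hm', hchar⟩ := hK.exists_msetDiff_eq hv
  have hmem : m ∈ MsetDiff m y := ⟨hm, le_rfl, hy.lt.not_ge⟩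
  rw [hm', Set.mem_singleton_iff] at hmem
  subst hmem
  exact ⟨v, ((hK.fire_iff m v).1 ⟨y, hv⟩).1, hchar⟩

theorem finsum_mnotAbove [BoundedOrder L] (hK : IsShotVector E O K) {lab : L → V}
    (hlab : ∀ m, MeetIrred m → ∀ x, x ≤ m ↔ K x (lab m) ≤ K m (lab m)) (g : V → ℕ) (a : L) :
    ∑ᶠ x ∈ MnotAbove a, g (lab x) = ∑ u, K a u * g u := by
  induction a using WellFoundedLT.induction with
  | ind a ih =>
    by_cases ha : a = ⊥
    · subst ha
      obtain ⟨a₀, h₀⟩ := hK.exists_eq_zero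
      have h1 : K ⊥ = 0 := le_antisymm (h₀ ▸ (hK.le_iff _ _).1 bot_le) (fun _ => Nat.zero_le _)
      simp [MnotAbove, h1]
    · obtain ⟨c, -, hca⟩ := exists_le_covBy_of_lt (bot_lt_iff_ne_bot.2 ha)
      obtain ⟨m, hm⟩ := hK.exists_msetDiff_eq_of_covBy c a hca
      have hmem : m ∈ MsetDiff c a := hm ▸ rfl
      have h1 := (hK.eq_add_single_of_msetDiff_eq hca hm (hlab m hmem.1)).1
      rw [mnotAbove_eq_insert hca.le hm, finsum_mem_insert _ (fun h => h.2 hmem.2.1)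
        (Set.toFinite _), ih c hca.lt, h1]
      simp [add_mul, Finset.sum_add_distrib, Pi.single_apply, add_comm]

theorem hasSolOmega [BoundedOrder L] (hK : IsShotVector E O K) (hE : IsASM E) :
    HasSolOmega L := by
  obtain ⟨-, s, hs, -, hsymm⟩ := hE
  have hex : ∀ m, ∃ v, MeetIrred m → ¬ IsSink E v ∧ ∀ x, x ≤ m ↔ K x v ≤ K m v := fun m => by
    by_cases hm : MeetIrred m
    · obtain ⟨v, hv⟩ := hK.exists_label hm
      exact ⟨v, fun _ => hv⟩
    · exact ⟨s, fun h => (hm h).elim⟩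
  choose lab hlab using hex
  have hchar : ∀ m, MeetIrred m → ∀ x, x ≤ m ↔ K x (lab m) ≤ K m (lab m) :=
    fun m hm => (hlab m hm).2
  have hns : ∀ m, MeetIrred m → lab m ≠ s := fun m hm h => (hlab m hm).1 (h ▸ hs)
  let B := ∑ v, O v + ∑ v, ∑ u, K ⊤ u * E u v
  let C := 2 * B + 1
  let R : L → V → ℕ := fun a v => ∑ u ∈ Finset.univ.erase v, K a u * E u v
  have hOB : ∀ v, O v ≤ B := fun v =>
    (Finset.single_le_sum (f := O) (fun _ _ => Nat.zero_le _) (Finset.mem_univ v)).trans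
      (Nat.le_add_right _ _)
  have hR : ∀ a v, ∑ u, K a u * E u v = K a v * E v v + R a v := fun a v =>
    (Finset.add_sum_erase _ (fun u => K a u * E u v) (Finset.mem_univ v)).symm
  have hRB : ∀ a v, R a v ≤ B := fun a v => by
    have h1 : R a v ≤ ∑ u, K ⊤ u * E u v :=
      (Finset.sum_le_sum_of_subset (Finset.erase_subset _ _)).trans
      (Finset.sum_le_sum fun u _ => Nat.mul_le_mul_right _ ((hK.le_iff a ⊤).1 le_top u))
    have h2 := Finset.single_le_sum (f := fun v => ∑ u, K ⊤ u * E u v)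
      (fun _ _ => Nat.zero_le _) (Finset.mem_univ v)
    exact (h1.trans h2).trans (Nat.le_add_left _ _)
  let g : V → V → ℕ := fun v u => if u = v then C else E u v
  have hsum : ∀ a v, ∑ᶠ x ∈ MnotAbove a, g v (lab x) = K a v * C + R a v := by
    intro a v
    rw [hK.finsum_mnotAbove hchar, ← Finset.add_sum_erase _ _ (Finset.mem_univ v)]
    congr 1
    · simp [g]
    · exact Finset.sum_congr rfl fun u hu => by simp [g, Finset.ne_of_mem_erase hu]
  let W : L → ℕ := fun m => if Uset m = {(⊥ : L)} then 1 else
    K m (lab m) * C + outDeg E (lab m) * (K m (lab m) + 1) -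
      (O (lab m) + K m (lab m) * E (lab m) (lab m))
  refine ⟨W, fun x m => g (lab m) (lab x), fun m hm => ⟨fun hU => by simp [W, hU], fun hU => ?_⟩,
    fun m₁ m₂ hne h₁ h₂ => ?_⟩
  · simp only [W, hU, if_false, hsum]
    constructor
    · intro a ha
      have ham := le_of_mem_lset hK.exists_msetDiff_eq_of_covBy hm ha
      have hle := (hchar m hm a).1 ham
      have hloop := loop_le_outDeg E (lab m)
      have hRa := hRB a (lab m)
      have hOv := hOB (lab m)
      rcases hle.lt_or_eq with hlt | heq
      · have h1 : (K a (lab m) + 1) * C ≤ K m (lab m) * C := Nat.mul_le_mul_right _ hlt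
        have h2 : K m (lab m) * E (lab m) (lab m) ≤ outDeg E (lab m) * (K m (lab m) + 1) := by
          nlinarith
        simp only [C, add_mul, one_mul] at h1 ⊢
        omega
      · have hnf : ¬ outDeg E (lab m) * (K m (lab m) + 1) ≤
            O (lab m) + K m (lab m) * E (lab m) (lab m) + R a (lab m) := by
          intro hf
          obtain ⟨b, hb⟩ := (hK.fire_iff a (lab m)).2
            ⟨(hlab m hm).1, by rw [hR, heq, ← add_assoc]; exact hf⟩
          have hab := hK.covBy hb
          obtain ⟨m', hm'⟩ := hK.exists_msetDiff_eq_of_covBy a b hab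
          have hmem : m ∈ MsetDiff a b := by
            refine ⟨hm, ham, fun hbm => ?_⟩
            have := (hchar m hm b).1 hbm
            simp [hb] at this
            omega
          rw [hm', Set.mem_singleton_iff] at hmem
          subst hmem
          obtain ⟨u, hu, hua⟩ := exists_mem_uset_le hab hm'
          exact ha.1 u hu hua
        rw [heq]
        omega
    · intro a ha
      obtain ⟨y, hay, hy⟩ := ha.1
      obtain ⟨h1, h2⟩ := hK.eq_add_single_of_msetDiff_eq hay hy (hchar m hm)
      have h3 := ((hK.fire_iff a (lab m)).1 ⟨y, h1⟩).2
      rw [hR, h2] at h3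
      rw [h2]
      omega
  · have hm₂ := h₁.1
    have hm₁ := h₂.1
    by_cases heq : lab m₁ = lab m₂
    · simp [g, heq]
    · simp only [g, heq, Ne.symm heq, if_false]
      exact hsymm _ _ heq (hns _ hm₁) (hns _ hm₂)

end IsShotVector

end SandpileToOmega

theorem MemLASM.hasSolOmega {L : Type*} [Lattice L] [Finite L] [BoundedOrder L]
    (h : MemLASM L) : HasSolOmega L := by
  obtain ⟨V, _, E, O, hE, hO, hL⟩ := h
  have := Fintype.ofFinite V
  obtain ⟨K, hK⟩ := exists_isShotVector hO hL
  exact hK.hasSolOmega hE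

theorem HasSolOmega.memLASM {L : Type*} [Lattice L] [Fintype L] [BoundedOrder L]
    (hULD : IsULD L) (h : HasSolOmega L) : MemLASM L := by
  obtain ⟨W, Ee, hsol⟩ := h
  obtain ⟨n, ⟨φ⟩⟩ := Finite.exists_equiv_fin {m : L // MeetIrred m}
  exact memLASM_of_solvesOmega hULD hsol φ.symm

/-- a finite ULD lattice `L` belongs to `L(ASM)` if and only if the
system `Ω` has a non-negative integer solution. -/
theorem stmt11 {L : Type*} [Lattice L] [Fintype L] [BoundedOrder L]
    (hULD : IsULD L) :
    MemLASM L ↔ HasSolOmega L :=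
  ⟨MemLASM.hasSolOmega, HasSolOmega.memLASM hULD⟩
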